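/- Let P ≥ 1 and 1 ≤ p ≤ P be integers and let ξ > 0. Then lim_{ρ → ∞} ρ^{p(m+1)} · μ_{a,m}^{⊗P}({x ∈ ℝ^P : #{i : x_i > ρξ} ≥ p}) = C(P,p) · ( (m+1)! · (aξ)^{m+1} )^{-p}. In particular the outage probability of the p-th ordered user decays like ρ^{-p(m+1)}, i.e., the achieved diversity order is p(m+1) (equal to p(N - M̃ + 1) in the paper's notation). -/

import Mathlib

open MeasureTheory Filter

/-- The inverse-gamma density with shape `m+1` and scale `1/a`:
`f a m x = x^{-(m+2)} e^{-1/(a x)} / (m! a^{m+1})` for `x > 0`, and `0` otherwise. -/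
noncomputable def invGammaDensity (a : ℝ) (m : ℕ) (x : ℝ) : ℝ :=
  if 0 < x then x ^ (-((m : ℤ) + 2)) * Real.exp (-(1 / (a * x))) / (m.factorial * a ^ (m + 1))
  else 0

/-- The inverse-gamma probability measure `μ_{a,m}` on `ℝ`. -/
noncomputable def invGammaMeasure (a : ℝ) (m : ℕ) : Measure ℝ :=
  volume.withDensity (fun x => ENNReal.ofReal (invGammaDensity a m x))

noncomputable def igQ (m : ℕ) (u : ℝ) : ℝ :=
  Real.exp (-u) * ∑ k ∈ Finset.range (m + 1), u ^ k / (k.factorial : ℝ)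

lemma igQ_deriv (m : ℕ) (u : ℝ) :
    HasDerivAt (igQ m) (-(Real.exp (-u) * (u ^ m / (m.factorial : ℝ)))) u := by
  induction m with
  | zero =>
    have h : igQ 0 = fun u => Real.exp (-u) := by
      funext u; simp [igQ]
    rw [h]
    simpa using (hasDerivAt_neg u).exp
  | succ n ih =>
    have h : igQ (n + 1) = fun u => igQ n u + Real.exp (-u) * (u ^ (n + 1) / ((n + 1).factorial : ℝ)) := by
      funext u
      simp only [igQ]
      rw [Finset.sum_range_succ _ (n + 1), mul_add]
    rw [h]
    have h1 : HasDerivAt (fun u : ℝ => Real.exp (-u)) (Real.exp (-u) * (-1)) u :=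
      (hasDerivAt_neg u).exp
    have h2 : HasDerivAt (fun u : ℝ => u ^ (n + 1) / ((n + 1).factorial : ℝ))
        (((n + 1 : ℕ) : ℝ) * u ^ n / ((n + 1).factorial : ℝ)) u := by
      simpa using (hasDerivAt_pow (n + 1) u).div_const ((n + 1).factorial : ℝ)
    have h3 := ih.add (h1.mul h2)
    refine h3.congr_deriv ?_
    have hf : (n.factorial : ℝ) ≠ 0 := by exact_mod_cast n.factorial_ne_zero
    have hn : ((n : ℝ) + 1) ≠ 0 := by positivity
    rw [Nat.factorial_succ]
    push_cast
    field_simp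
    ring

lemma igQ_atTop (m : ℕ) : Tendsto (igQ m) atTop (nhds 0) := by
  have h : igQ m = fun u => ∑ k ∈ Finset.range (m + 1), (u ^ k * Real.exp (-u)) / (k.factorial : ℝ) := by
    funext u
    simp only [igQ, Finset.mul_sum]
    exact Finset.sum_congr rfl fun k _ => by ring
  rw [h]
  have := tendsto_finsetSum (Finset.range (m + 1)) (fun k _ =>
    (Real.tendsto_pow_mul_exp_neg_atTop_nhds_zero k).div_const (k.factorial : ℝ))
  simpa using this

lemma igQ_zero (m : ℕ) : igQ m 0 = 1 := by
  simp [igQ, Finset.sum_range_succ']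

noncomputable def igH (a : ℝ) (m : ℕ) (x : ℝ) : ℝ :=
  if 0 < x then igQ m ((a * x)⁻¹) else 0

lemma ig_inv_atTop (a : ℝ) (ha : 0 < a) :
    Tendsto (fun x : ℝ => (a * x)⁻¹) atTop (nhds 0) :=
  tendsto_inv_atTop_zero.comp (tendsto_id.const_mul_atTop ha)

lemma igH_atTop (a : ℝ) (ha : 0 < a) (m : ℕ) : Tendsto (igH a m) atTop (nhds 1) := by
  have h1 : Tendsto (fun x : ℝ => igQ m ((a * x)⁻¹)) atTop (nhds 1) := by
    have := (igQ_deriv m 0).continuousAt.tendsto.comp (ig_inv_atTop a ha)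
    rwa [igQ_zero] at this
  refine h1.congr' ?_
  filter_upwards [eventually_gt_atTop 0] with x hx
  simp [igH, hx]

lemma igH_deriv (a : ℝ) (ha : 0 < a) (m : ℕ) (x : ℝ) (hx : 0 < x) :
    HasDerivAt (igH a m) (invGammaDensity a m x) x := by
  have hev : igH a m =ᶠ[nhds x] fun x => igQ m ((a * x)⁻¹) := by
    filter_upwards [lt_mem_nhds hx] with y hy
    simp [igH, hy]
  refine HasDerivAt.congr_of_eventuallyEq ?_ hev
  have h1 : HasDerivAt (fun y : ℝ => (a * y)⁻¹) (-a / (a * x) ^ 2) x := by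
    have := ((hasDerivAt_id x).const_mul a).inv (by simp; exact ⟨ha.ne', hx.ne'⟩)
    simp only [id, mul_one] at this
    exact this
  refine ((igQ_deriv m _).comp x h1).congr_deriv ?_
  have hf : (m.factorial : ℝ) ≠ 0 := by exact_mod_cast m.factorial_ne_zero
  simp only [invGammaDensity, hx, if_true, one_div]
  have : x ^ (-((m : ℤ) + 2)) = (x ^ (m + 2))⁻¹ := by
    rw [zpow_neg]; norm_cast
  rw [this, inv_pow, mul_pow]
  field_simp
  try ring

lemma ig_nonneg (a : ℝ) (ha : 0 < a) (m : ℕ) (x : ℝ) : 0 ≤ invGammaDensity a m x := by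
  unfold invGammaDensity
  split_ifs <;> positivity

lemma igH_cont (a : ℝ) (ha : 0 < a) (m : ℕ) (t : ℝ) (ht : 0 ≤ t) :
    ContinuousWithinAt (igH a m) (Set.Ici t) t := by
  rcases ht.eq_or_lt with rfl | ht
  · rw [← continuousWithinAt_Ioi_iff_Ici]
    have h0 : igH a m 0 = 0 := by simp [igH]
    rw [ContinuousWithinAt, h0]
    have h1 : Tendsto (fun x : ℝ => (a * x)⁻¹) (nhdsWithin 0 (Set.Ioi 0)) atTop := by
      have : Tendsto (fun x : ℝ => a⁻¹ * x⁻¹) (nhdsWithin 0 (Set.Ioi 0)) atTop :=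
        tendsto_inv_nhdsGT_zero.const_mul_atTop (inv_pos.2 ha)
      refine this.congr fun x => by rw [mul_inv]
    refine ((igQ_atTop m).comp h1).congr' ?_
    filter_upwards [self_mem_nhdsWithin] with x hx
    simp [igH, Set.mem_Ioi.1 hx]
  · exact (igH_deriv a ha m t ht).continuousAt.continuousWithinAt

lemma ig_tail (a : ℝ) (ha : 0 < a) (m : ℕ) (t : ℝ) (ht : 0 ≤ t) :
    invGammaMeasure a m (Set.Ioi t) = ENNReal.ofReal (1 - igH a m t) := by
  have hd : ∀ x ∈ Set.Ioi t, HasDerivAt (igH a m) (invGammaDensity a m x) x :=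
    fun x hx => igH_deriv a ha m x (ht.trans_lt hx)
  have hi := integrableOn_Ioi_deriv_of_nonneg (igH_cont a ha m t ht) hd
    (fun x _ => ig_nonneg a ha m x) (igH_atTop a ha m)
  have he := integral_Ioi_of_hasDerivAt_of_nonneg (igH_cont a ha m t ht) hd
    (fun x _ => ig_nonneg a ha m x) (igH_atTop a ha m)
  rw [invGammaMeasure, withDensity_apply _ measurableSet_Ioi, ← he,
    ofReal_integral_eq_lintegral_ofReal hi (ae_of_all _ (ig_nonneg a ha m))]

lemma ig_prob (a : ℝ) (ha : 0 < a) (m : ℕ) : IsProbabilityMeasure (invGammaMeasure a m) := by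
  constructor
  have h1 : invGammaMeasure a m (Set.Ioi 0) = 1 := by
    rw [ig_tail a ha m 0 le_rfl]; simp [igH]
  have h2 : invGammaMeasure a m (Set.Iic 0) = 0 := by
    rw [invGammaMeasure, withDensity_apply _ measurableSet_Iic]
    refine (setLIntegral_congr_fun measurableSet_Iic (g := fun _ => 0) ?_).trans (by simp)
    intro x hx
    simp [invGammaDensity, not_lt.2 (Set.mem_Iic.1 hx)]
  rw [← Set.Iic_union_Ioi (a := (0 : ℝ)),
    measure_union (Set.Iic_disjoint_Ioi le_rfl) measurableSet_Ioi, h1, h2, zero_add]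

lemma ig_expand (μ : Measure ℝ) [IsProbabilityMeasure μ] (P p : ℕ) (t : ℝ) :
    ((Measure.pi (fun _ : Fin P => μ))
      {x : Fin P → ℝ | p ≤ (Finset.univ.filter (fun i => t < x i)).card}).toReal
    = ∑ S ∈ (Finset.univ : Finset (Finset (Fin P))).filter (fun S => p ≤ S.card),
        (μ.real (Set.Ioi t)) ^ S.card * (1 - μ.real (Set.Ioi t)) ^ (P - S.card) := by
  classical
  let B : Finset (Fin P) → Set (Fin P → ℝ) := fun S =>
    Set.pi Set.univ (fun i => if i ∈ S then Set.Ioi t else (Set.Ioi t)ᶜ)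
  have hB : ∀ S x, x ∈ B S ↔ Finset.univ.filter (fun i => t < x i) = S := by
    intro S x
    simp only [B, Set.mem_pi, Set.mem_univ, true_imp_iff, Finset.ext_iff, Finset.mem_filter,
      Finset.mem_univ, true_and]
    refine forall_congr' fun i => ?_
    by_cases h : i ∈ S <;> simp [h]
  have hset : {x : Fin P → ℝ | p ≤ (Finset.univ.filter (fun i => t < x i)).card}
      = ⋃ S ∈ (Finset.univ : Finset (Finset (Fin P))).filter (fun S => p ≤ S.card), B S := by
    ext x
    simp only [Set.mem_iUnion, hB, Set.mem_setOf_eq, Finset.mem_filter, Finset.mem_univ, true_and]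
    constructor
    · intro h; exact ⟨_, h, rfl⟩
    · rintro ⟨S, h, rfl⟩; exact h
  change (Measure.pi (fun _ : Fin P => μ)).real _ = _
  rw [hset, measureReal_biUnion_finset]
  · refine Finset.sum_congr rfl fun S _ => ?_
    simp only [B, Measure.real, Measure.pi_pi, ENNReal.toReal_prod]
    have : ∀ i, (μ (if i ∈ S then Set.Ioi t else (Set.Ioi t)ᶜ)).toReal
        = if i ∈ S then μ.real (Set.Ioi t) else 1 - μ.real (Set.Ioi t) := by
      intro i
      split_ifs
      · rfl
      · exact probReal_compl_eq_one_sub measurableSet_Ioi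
    simp only [this]
    rw [Finset.prod_ite]
    simp only [Finset.prod_const, Measure.real]
    congr 2
    · simp
    · rw [Finset.filter_not, Finset.card_sdiff]; simp
  · intro S _ T _ hST
    refine Set.disjoint_left.2 fun x hx hy => hST ?_
    rw [← (hB S x).1 hx, (hB T x).1 hy]
  · intro S _
    refine MeasurableSet.univ_pi fun i => ?_
    split_ifs
    · exact measurableSet_Ioi
    · exact measurableSet_Ioi.compl

lemma ig_asymp (m : ℕ) :
    Tendsto (fun u : ℝ => (1 - igQ m u) / u ^ (m + 1)) (nhdsWithin 0 (Set.Ioi 0))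
      (nhds (((m + 1).factorial : ℝ)⁻¹)) := by
  have h := (Real.exp_sub_sum_range_succ_isLittleO_pow (m + 1)).tendsto_div_nhds_zero
  have h' := h.mono_left (nhdsWithin_le_nhds (s := Set.Ioi 0))
  have he : Tendsto (fun u : ℝ => Real.exp (-u)) (nhdsWithin 0 (Set.Ioi 0)) (nhds 1) := by
    have : Continuous (fun u : ℝ => Real.exp (-u)) := by fun_prop
    have := this.tendsto 0
    simp only [neg_zero, Real.exp_zero] at this
    exact this.mono_left nhdsWithin_le_nhds
  have h2 := he.mul (h'.add_const (((m + 1).factorial : ℝ)⁻¹))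
  rw [zero_add, one_mul] at h2
  refine h2.congr' ?_
  filter_upwards [self_mem_nhdsWithin] with u hu
  have hu : u ^ (m + 1) ≠ 0 := pow_ne_zero _ (Set.mem_Ioi.1 hu).ne'
  have hf : ((m + 1).factorial : ℝ) ≠ 0 := by exact_mod_cast (m + 1).factorial_ne_zero
  have hx : Real.exp (-u) * Real.exp u = 1 := by rw [← Real.exp_add]; simp
  rw [igQ, Finset.sum_range_succ _ (m + 1), ← hx]
  field_simp
  ring

lemma ig_tail_asymp (a : ℝ) (ha : 0 < a) (m : ℕ) (ξ : ℝ) (hξ : 0 < ξ) :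
    Tendsto (fun ρ : ℝ => ρ ^ (m + 1) * (invGammaMeasure a m).real (Set.Ioi (ρ * ξ))) atTop
      (nhds ((((m + 1).factorial : ℝ) * (a * ξ) ^ (m + 1))⁻¹)) := by
  have hu : Tendsto (fun ρ : ℝ => (a * (ρ * ξ))⁻¹) atTop (nhdsWithin 0 (Set.Ioi 0)) := by
    refine tendsto_nhdsWithin_iff.2 ⟨(ig_inv_atTop a ha).comp (tendsto_id.atTop_mul_const hξ), ?_⟩
    filter_upwards [eventually_gt_atTop 0] with ρ hρ
    exact Set.mem_Ioi.2 (by positivity)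
  have h := ((ig_asymp m).comp hu).mul_const (((a * ξ) ^ (m + 1))⁻¹)
  rw [← mul_inv] at h
  have hG : Tendsto (fun ρ : ℝ => ρ ^ (m + 1) * (1 - igQ m ((a * (ρ * ξ))⁻¹))) atTop
      (nhds ((((m + 1).factorial : ℝ) * (a * ξ) ^ (m + 1))⁻¹)) := by
    refine h.congr' ?_
    filter_upwards [eventually_gt_atTop 0] with ρ hρ
    simp only [Function.comp]
    have e : (a * (ρ * ξ))⁻¹ ^ (m + 1) = (ρ ^ (m + 1) * (a * ξ) ^ (m + 1))⁻¹ := by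
      rw [inv_pow, ← mul_pow]; congr 2; ring
    rw [e]
    have : ρ ^ (m + 1) ≠ 0 := by positivity
    have : (a * ξ) ^ (m + 1) ≠ 0 := by positivity
    field_simp
  refine hG.congr' ?_
  have hpos : ∀ᶠ ρ in atTop, 0 < ρ ^ (m + 1) * (1 - igQ m ((a * (ρ * ξ))⁻¹)) :=
    hG.eventually (lt_mem_nhds (by positivity))
  filter_upwards [hpos, eventually_gt_atTop 0] with ρ h1 hρ
  have h2 : 0 < 1 - igQ m ((a * (ρ * ξ))⁻¹) := (pos_iff_pos_of_mul_pos h1).1 (by positivity)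
  have h3 : 0 < ρ * ξ := by positivity
  rw [Measure.real, ig_tail a ha m _ h3.le]
  simp only [igH, h3, if_true]
  rw [ENNReal.toReal_ofReal h2.le]

/-- Diversity order of the `p`-th ordered user (Theorem 1): as `ρ → ∞`,
`ρ^{p(m+1)} μ_{a,m}^{⊗P}({x : #{i : x_i > ρξ} ≥ p}) → C(P,p) ((m+1)! (aξ)^{m+1})^{-p}`,
so the outage probability decays like `ρ^{-p(m+1)}`, i.e. the diversity order is
`p(m+1) = p(N - M̃ + 1)`. -/
theorem diversity_order_ordered_user (a : ℝ) (ha : 0 < a) (m : ℕ)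
    (P p : ℕ) (hP : 1 ≤ P) (hp : 1 ≤ p) (hpP : p ≤ P) (ξ : ℝ) (hξ : 0 < ξ) :
    Tendsto (fun ρ : ℝ => ρ ^ (p * (m + 1)) *
        ((Measure.pi (fun _ : Fin P => invGammaMeasure a m))
            {x : Fin P → ℝ | p ≤ (Finset.univ.filter (fun i => ρ * ξ < x i)).card}).toReal)
      atTop
      (nhds ((P.choose p : ℝ) * ((((m + 1).factorial : ℝ) * (a * ξ) ^ (m + 1))⁻¹) ^ p)) := by
  have hprob := ig_prob a ha m
  set c : ℝ := (((m + 1).factorial : ℝ) * (a * ξ) ^ (m + 1))⁻¹ with hc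
  have hG := ig_tail_asymp a ha m ξ hξ
  rw [← hc] at hG
  have hG0 : Tendsto (fun ρ : ℝ => (invGammaMeasure a m).real (Set.Ioi (ρ * ξ))) atTop (nhds 0) := by
    have h1 : Tendsto (fun ρ : ℝ => (ρ ^ (m + 1))⁻¹) atTop (nhds 0) :=
      tendsto_inv_atTop_zero.comp (tendsto_pow_atTop m.succ_ne_zero)
    have h2 := h1.mul hG
    rw [zero_mul] at h2
    refine h2.congr' ?_
    filter_upwards [eventually_gt_atTop 0] with ρ hρ
    have : ρ ^ (m + 1) ≠ 0 := by positivity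
    field_simp
  simp only [ig_expand, Finset.mul_sum]
  have key : ∀ S ∈ (Finset.univ : Finset (Finset (Fin P))).filter (fun S => p ≤ S.card),
      Tendsto (fun ρ : ℝ => ρ ^ (p * (m + 1)) *
        ((invGammaMeasure a m).real (Set.Ioi (ρ * ξ)) ^ S.card *
          (1 - (invGammaMeasure a m).real (Set.Ioi (ρ * ξ))) ^ (P - S.card))) atTop
        (nhds (if S.card = p then c ^ p else 0)) := by
    intro S hS
    have hS : p ≤ S.card := (Finset.mem_filter.1 hS).2
    have h := ((hG.pow p).mul (hG0.pow (S.card - p))).mul ((hG0.const_sub 1).pow (P - S.card))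
    have e : c ^ p * 0 ^ (S.card - p) * (1 - 0) ^ (P - S.card)
        = if S.card = p then c ^ p else 0 := by
      split_ifs with h
      · simp [h]
      · have : S.card - p ≠ 0 := by omega
        simp [this]
    rw [e] at h
    refine h.congr fun ρ => ?_
    rw [mul_pow, ← pow_mul, mul_comm (m + 1) p, mul_assoc (ρ ^ _), ← pow_add,
      Nat.add_sub_cancel' hS, mul_assoc]
  have h := tendsto_finsetSum _ key
  convert h using 2
  rw [← Finset.sum_filter, Finset.sum_const, nsmul_eq_mul, Finset.filter_filter]
  congr 2
  have : (Finset.univ : Finset (Finset (Fin P))).filter (fun S => p ≤ S.card ∧ S.card = p)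
      = Finset.powersetCard p Finset.univ := by
    ext S
    simp only [Finset.mem_filter, Finset.mem_univ, true_and, Finset.mem_powersetCard,
      Finset.subset_univ]
    exact ⟨fun h => h.2, fun h => ⟨h.ge, h⟩⟩
  rw [this, Finset.card_powersetCard, Finset.card_univ, Fintype.card_fin]
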